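/- One has lim_{n→∞} (log|r_n|)/n = log λ1 and lim_{n→∞} (log|u_n|)/n = lim_{n→∞} (log|w_n|)/n = lim_{n→∞} (log|v_n|)/n = log λ3, where λ1, λ2, λ3 are the three real roots of λ^3 − 188λ^2 − 2368λ + 4 ordered by increasing absolute value (λ1 is the unique root in (0,1) and λ3 the unique root greater than 1). -/

import Mathlib

noncomputable section

open Filter


/-- `a₀(n)` from recursion (1). -/
def a0 (x : ℚ) : ℚ := 41218*x^3 - 48459*x^2 + 20010*x - 2871

/-- `a₁(n)` from recursion (1). -/
def a1 (x : ℚ) : ℚ := 2*(48802112*x^9 + 89030880*x^8 + 36002654*x^7 - 24317344*x^6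
  - 19538418*x^5 + 1311365*x^4 + 3790503*x^3 + 460056*x^2 - 271701*x - 60291)

/-- `a₂(n)` from recursion (1). -/
def a2 (x : ℚ) : ℚ := 3874492*x^8 - 2617900*x^7 - 3144314*x^6 + 2947148*x^5
  + 647130*x^4 - 1182926*x^3 + 115771*x^2 + 170716*x - 44541

def b0 (x : ℚ) : ℚ := -a0 (-x)
def b1 (x : ℚ) : ℚ := a2 (-x)
def b2 (x : ℚ) : ℚ := -a1 (-x)

/-- The auxiliary difference equation (8), imposed for all integers `n ≥ 2`. -/
def Rec2 (y : ℕ → ℚ) : Prop := ∀ n : ℕ, 2 ≤ n →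
  (n : ℚ)*((n : ℚ) + 1)^5 * b0 ((n : ℚ) - 1) * y (n+1) - 2*(n : ℚ)*b1 (n : ℚ) * y n
    - b2 (n : ℚ) * y (n-1) + 2*((n : ℚ) - 1)^5*(2*(n : ℚ) - 1)*b0 (n : ℚ) * y (n-2) = 0

/-- The very-well-poised hypergeometric series `r_n`
(the summation index `k ≥ 1` is written as `k + 1` with `k : ℕ`). -/
def rr (n : ℕ) : ℝ := (Nat.factorial n : ℝ)^4 * ∑' k : ℕ,
  (((k : ℝ) + 1) + (n : ℝ)/2)
    * (∏ j ∈ Finset.Icc 1 n, (((k : ℝ) + 1) - (j : ℝ)))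
    * (∏ j ∈ Finset.Icc 1 n, (((k : ℝ) + 1) + (n : ℝ) + (j : ℝ)))
    / (∏ j ∈ Finset.range (n+1), (((k : ℝ) + 1) + (j : ℝ))^6)


lemma contr_lemma (f d : ℕ → ℝ) (q : ℝ) (hq0 : 0 ≤ q) (hq1 : q < 1) (hf : ∀ n, 0 ≤ f n)
    (h : ∀ᶠ n in atTop, f (n+1) ≤ q * f n + d n) (hd : Tendsto d atTop (nhds 0)) :
    Tendsto f atTop (nhds 0) := by
  rw [Metric.tendsto_atTop]
  intro ε hε
  have hδ : 0 < ε * (1 - q) / 2 := by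
    have : 0 < 1 - q := by linarith
    positivity
  have h2 : ∀ᶠ n in atTop, d n < ε * (1 - q) / 2 := hd.eventually_lt_const hδ
  obtain ⟨N, hN⟩ := eventually_atTop.1 (h.and h2)
  have key : ∀ k, f (N + k) ≤ q ^ k * f N + ε / 2 := by
    intro k
    induction k with
    | zero => simp; linarith
    | succ k ih =>
      have h3 := hN (N + k) (by omega)
      have h4 : q * f (N+k) ≤ q * (q ^ k * f N + ε / 2) := mul_le_mul_of_nonneg_left ih hq0
      have h5 : f (N + (k+1)) ≤ q * f (N+k) + d (N+k) := h3.1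
      rw [pow_succ]
      nlinarith [h3.2]
  have h6 : Tendsto (fun k : ℕ => q ^ k * f N) atTop (nhds 0) := by
    simpa using (tendsto_pow_atTop_nhds_zero_of_lt_one hq0 hq1).mul_const (f N)
  have h7 : ∀ᶠ k in atTop, q ^ k * f N < ε / 2 := h6.eventually_lt_const (by linarith)
  obtain ⟨K, hK⟩ := eventually_atTop.1 h7
  refine ⟨N + K, fun n hn => ?_⟩
  have h8 := key (n - N)
  have h9 := hK (n - N) (by omega)
  rw [Nat.add_sub_cancel' (by omega)] at h8
  rw [Real.dist_eq, sub_zero, abs_of_nonneg (hf n)]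
  linarith

lemma log_div_of_ratio (y : ℕ → ℝ) (l : ℝ) (hl : 0 < l) (hy : ∀ n, 1 ≤ n → 0 < y n)
    (h : Tendsto (fun n => y (n+2) / y (n+1)) atTop (nhds l)) :
    Tendsto (fun n : ℕ => Real.log |y n| / (n : ℝ)) atTop (nhds (Real.log l)) := by
  have h1 : Tendsto (fun n => Real.log (y (n+2) / y (n+1))) atTop (nhds (Real.log l)) :=
    (Real.continuousAt_log hl.ne').tendsto.comp h
  have h2 := h1.cesaro
  have h3 : ∀ n : ℕ, ∑ i ∈ Finset.range n, Real.log (y (i+2) / y (i+1))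
      = Real.log (y (n+1)) - Real.log (y 1) := by
    intro n
    induction n with
    | zero => simp
    | succ n ih =>
      rw [Finset.sum_range_succ, ih, Real.log_div (hy _ (by omega)).ne' (hy _ (by omega)).ne']
      ring
  have hinv : Tendsto (fun n : ℕ => ((n:ℝ))⁻¹) atTop (nhds 0) := tendsto_inv_atTop_nhds_zero_nat
  have h4 : Tendsto (fun n : ℕ => (n:ℝ)⁻¹ * Real.log (y (n+1))) atTop (nhds (Real.log l)) := by
    have := h2.add (hinv.mul_const (Real.log (y 1)))
    simp only [h3] at this
    rw [zero_mul, add_zero] at this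
    refine this.congr (fun n => ?_)
    ring
  rw [← tendsto_add_atTop_iff_nat 1]
  have h5 : Tendsto (fun n : ℕ => (n:ℝ) / ((n:ℝ) + 1)) atTop (nhds 1) :=
    tendsto_natCast_div_add_atTop 1
  have h6 := h4.mul h5
  rw [mul_one] at h6
  refine h6.congr' ?_
  filter_upwards [eventually_ge_atTop 1] with n hn
  have : (0:ℝ) < n := by exact_mod_cast hn
  rw [abs_of_pos (hy _ (by omega))]
  push_cast
  field_simp

/-- Coefficients of the recursion at index `n = m + 2`. -/
def cL (m : ℝ) : ℝ := (m+2) * (m+3)^5 *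
  (41218*(m+1)^3 + 48459*(m+1)^2 + 20010*(m+1) + 2871)

def cA (m : ℝ) : ℝ := 2 * (m+2) * (3874492*(m+2)^8 + 2617900*(m+2)^7 - 3144314*(m+2)^6
  - 2947148*(m+2)^5 + 647130*(m+2)^4 + 1182926*(m+2)^3 + 115771*(m+2)^2 - 170716*(m+2) - 44541)

def cB (m : ℝ) : ℝ := 2*(48802112*(m+2)^9 - 89030880*(m+2)^8 + 36002654*(m+2)^7
  + 24317344*(m+2)^6 - 19538418*(m+2)^5 - 1311365*(m+2)^4 + 3790503*(m+2)^3 - 460056*(m+2)^2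
  - 271701*(m+2) + 60291)

def cC (m : ℝ) : ℝ := 2 * (m+1)^5 * (2*m+3) *
  (41218*(m+2)^3 + 48459*(m+2)^2 + 20010*(m+2) + 2871)

lemma cL_pos (m : ℝ) (hm : 0 ≤ m) : 0 < cL m := by unfold cL; positivity

lemma cC_nonneg (m : ℝ) (hm : 0 ≤ m) : 0 ≤ cC m := by unfold cC; positivity

lemma cA_ge (m : ℝ) (hm : 0 ≤ m) : 10 * cL m ≤ cA m := by
  rw [← sub_nonneg]; unfold cL cA; ring_nf; positivity

lemma cB_ge (m : ℝ) (hm : 0 ≤ m) : cC m ≤ cB m := by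
  rw [← sub_nonneg]; unfold cC cB; ring_nf; positivity

lemma rec_real (y : ℕ → ℚ) (hy : Rec2 y) (m : ℕ) :
    cL m * (y (m+3) : ℝ) = cA m * (y (m+2) : ℝ) + cB m * (y (m+1) : ℝ) - cC m * (y m : ℝ) := by
  have h := hy (m+2) (by omega)
  have e1 : m + 2 + 1 = m + 3 := rfl
  have e2 : m + 2 - 1 = m + 1 := rfl
  have e3 : m + 2 - 2 = m := rfl
  rw [e1, e2, e3] at h
  unfold b0 b1 b2 a0 a1 a2 at h
  have h' := congrArg (fun q : ℚ => (q : ℝ)) h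
  push_cast at h'
  unfold cL cA cB cC
  linear_combination h'

lemma lim_aux (f F : ℝ → ℝ) (l : ℝ) (hF : ContinuousAt F 0) (h0 : F 0 = l)
    (h : ∀ x, 0 < x → f x = F x⁻¹) : Tendsto (fun n : ℕ => f n) atTop (nhds l) := by
  have h1 : Tendsto (fun n : ℕ => F ((n:ℝ)⁻¹)) atTop (nhds l) := by
    rw [← h0]
    exact hF.tendsto.comp tendsto_inv_atTop_nhds_zero_nat
  refine h1.congr' ?_
  filter_upwards [eventually_ge_atTop 1] with n hn
  exact (h n (by exact_mod_cast hn)).symm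

def dL (m : ℝ) : ℝ := (1+2*m) * (1+3*m)^5 *
  (41218*(1+m)^3 + 48459*m*(1+m)^2 + 20010*m^2*(1+m) + 2871*m^3)

def dA (m : ℝ) : ℝ := 2 * (1+2*m) * (3874492*(1+2*m)^8 + 2617900*m*(1+2*m)^7
  - 3144314*m^2*(1+2*m)^6 - 2947148*m^3*(1+2*m)^5 + 647130*m^4*(1+2*m)^4
  + 1182926*m^5*(1+2*m)^3 + 115771*m^6*(1+2*m)^2 - 170716*m^7*(1+2*m) - 44541*m^8)

def dB (m : ℝ) : ℝ := 2*(48802112*(1+2*m)^9 - 89030880*m*(1+2*m)^8 + 36002654*m^2*(1+2*m)^7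
  + 24317344*m^3*(1+2*m)^6 - 19538418*m^4*(1+2*m)^5 - 1311365*m^5*(1+2*m)^4
  + 3790503*m^6*(1+2*m)^3 - 460056*m^7*(1+2*m)^2 - 271701*m^8*(1+2*m) + 60291*m^9)

def dC (m : ℝ) : ℝ := 2 * (1+m)^5 * (2+3*m) *
  (41218*(1+2*m)^3 + 48459*m*(1+2*m)^2 + 20010*m^2*(1+2*m) + 2871*m^3)

lemma cL_eq (x : ℝ) (hx : 0 < x) : cL x = x^9 * dL x⁻¹ := by
  unfold cL dL; field_simp
lemma cA_eq (x : ℝ) (hx : 0 < x) : cA x = x^9 * dA x⁻¹ := by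
  unfold cA dA; field_simp
lemma cB_eq (x : ℝ) (hx : 0 < x) : cB x = x^9 * dB x⁻¹ := by
  unfold cB dB; field_simp
lemma cC_eq (x : ℝ) (hx : 0 < x) : cC x = x^9 * dC x⁻¹ := by
  unfold cC dC; field_simp

lemma cont_dL : Continuous dL := by unfold dL; fun_prop
lemma cont_dA : Continuous dA := by unfold dA; fun_prop
lemma cont_dB : Continuous dB := by unfold dB; fun_prop
lemma cont_dC : Continuous dC := by unfold dC; fun_prop

lemma dL_zero : dL 0 = 41218 := by norm_num [dL]

lemma lim_A : Tendsto (fun n : ℕ => cA n / cL n) atTop (nhds 188) := by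
  refine lim_aux (fun x => cA x / cL x) (fun x => dA x / dL x) 188
    (cont_dA.continuousAt.div cont_dL.continuousAt (by rw [dL_zero]; norm_num)) ?_ ?_
  · norm_num [dA, dL]
  · intro x hx
    have : x^9 ≠ 0 := by positivity
    simp only [cA_eq x hx, cL_eq x hx, mul_div_mul_left _ _ this]

lemma lim_B : Tendsto (fun n : ℕ => cB n / cL n) atTop (nhds 2368) := by
  refine lim_aux (fun x => cB x / cL x) (fun x => dB x / dL x) 2368
    (cont_dB.continuousAt.div cont_dL.continuousAt (by rw [dL_zero]; norm_num)) ?_ ?_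
  · norm_num [dB, dL]
  · intro x hx
    have : x^9 ≠ 0 := by positivity
    simp only [cB_eq x hx, cL_eq x hx, mul_div_mul_left _ _ this]

lemma lim_C : Tendsto (fun n : ℕ => cC n / cL n) atTop (nhds 4) := by
  refine lim_aux (fun x => cC x / cL x) (fun x => dC x / dL x) 4
    (cont_dC.continuousAt.div cont_dL.continuousAt (by rw [dL_zero]; norm_num)) ?_ ?_
  · norm_num [dC, dL]
  · intro x hx
    have : x^9 ≠ 0 := by positivity
    simp only [cC_eq x hx, cL_eq x hx, mul_div_mul_left _ _ this]

lemma step_bound (A B C r s l : ℝ) (hl : 199 < l) (hl3 : l^3 - 188*l^2 - 2368*l + 4 = 0)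
    (hr : 100 ≤ r) (hs : 100 ≤ s) :
    |A + B / r - C / (r * s) - l| ≤ 1/4 * |r - l| + 1/4 * |s - l|
      + (|A - 188| + |B - 2368| + |C - 4|) := by
  have hl' : l = 188 + 2368 / l - 4 / (l * l) := by
    field_simp
    linarith
  have hr0 : 0 < r := by linarith
  have hs0 : 0 < s := by linarith
  have hl0 : 0 < l := by linarith
  have e : A + B / r - C / (r * s) - l = (A - 188) + (B - 2368) * (1 / r) - (C - 4) * (1 / (r*s))
      - (2368 / (r * l)) * (r - l) + (4 / (r * l * l)) * (r - l) + (4 / (r * s * l)) * (s - l) := by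
    conv_lhs => rw [hl']
    field_simp
    ring
  have i1 : 1 / r ≤ 1 := by rw [div_le_one hr0]; linarith
  have i2 : 1 / (r * s) ≤ 1 := by rw [div_le_one (by positivity)]; nlinarith
  have i3 : 2368 / (r * l) ≤ 1/8 := by
    rw [div_le_iff₀ (by positivity)]; nlinarith
  have i4 : 4 / (r * l * l) ≤ 1/8 := by
    have : 100 * 100 ≤ r * l := by nlinarith
    rw [div_le_iff₀ (by positivity)]; nlinarith
  have i5 : 4 / (r * s * l) ≤ 1/4 := by
    have : 100 * 100 ≤ r * s := by nlinarith
    rw [div_le_iff₀ (by positivity)]; nlinarith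
  have j1 : |(B - 2368) * (1 / r)| ≤ |B - 2368| := by
    rw [abs_mul, abs_of_pos (by positivity : 0 < 1 / r)]
    exact mul_le_of_le_one_right (abs_nonneg _) i1
  have j2 : |(C - 4) * (1 / (r*s))| ≤ |C - 4| := by
    rw [abs_mul, abs_of_pos (by positivity : 0 < 1 / (r*s))]
    exact mul_le_of_le_one_right (abs_nonneg _) i2
  have j3 : |(2368 / (r * l)) * (r - l)| ≤ 1/8 * |r - l| := by
    rw [abs_mul, abs_of_pos (by positivity : 0 < 2368 / (r * l))]
    exact mul_le_mul_of_nonneg_right i3 (abs_nonneg _)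
  have j4 : |(4 / (r * l * l)) * (r - l)| ≤ 1/8 * |r - l| := by
    rw [abs_mul, abs_of_pos (by positivity : 0 < 4 / (r * l * l))]
    exact mul_le_mul_of_nonneg_right i4 (abs_nonneg _)
  have j5 : |(4 / (r * s * l)) * (s - l)| ≤ 1/4 * |s - l| := by
    rw [abs_mul, abs_of_pos (by positivity : 0 < 4 / (r * s * l))]
    exact mul_le_mul_of_nonneg_right i5 (abs_nonneg _)
  rw [e]
  rw [abs_le] at *
  have := neg_abs_le (A - 188)
  have := le_abs_self (A - 188)
  constructor <;> linarith [j1.1, j1.2, j2.1, j2.2, j3.1, j3.2, j4.1, j4.2, j5.1, j5.2]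

lemma growth (y : ℕ → ℚ) (hy : Rec2 y) (h0 : 0 ≤ y 0) (h01 : y 0 ≤ y 1) (h1 : 0 < y 1)
    (h12 : 10 * y 1 ≤ y 2) (l : ℝ) (hl3 : l^3 - 188*l^2 - 2368*l + 4 = 0) (hl1 : 1 < l) :
    Tendsto (fun n : ℕ => Real.log |(y n : ℝ)| / (n : ℝ)) atTop (nhds (Real.log l)) := by
  have hl : 199 < l := by
    by_contra hcon
    push Not at hcon
    nlinarith [mul_nonneg (sub_nonneg.2 hl1.le) (sub_nonneg.2 hcon),
      mul_nonneg (mul_nonneg (sub_nonneg.2 hl1.le) (sub_nonneg.2 hcon)) (by linarith : (0:ℝ) ≤ l)]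
  set z : ℕ → ℝ := fun n => (y n : ℝ) with hz
  have hrec : ∀ m : ℕ, cL m * z (m+3) = cA m * z (m+2) + cB m * z (m+1) - cC m * z m :=
    rec_real y hy
  have inv : ∀ m : ℕ, 0 ≤ z m ∧ z m ≤ z (m+1) ∧ 0 < z (m+1) ∧ 10 * z (m+1) ≤ z (m+2) := by
    intro m
    induction m with
    | zero =>
      refine ⟨?_, ?_, ?_, ?_⟩
      · show (0:ℝ) ≤ (y 0 : ℝ)
        exact_mod_cast h0
      · show (y 0 : ℝ) ≤ (y 1 : ℝ)
        exact_mod_cast h01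
      · show (0:ℝ) < (y 1 : ℝ)
        exact_mod_cast h1
      · show 10 * (y 1 : ℝ) ≤ (y 2 : ℝ)
        exact_mod_cast h12
    | succ m ih =>
      obtain ⟨p1, p2, p3, p4⟩ := ih
      refine ⟨p3.le, ?_, ?_, ?_⟩
      · show z (m+1) ≤ z (m+2)
        linarith
      · show 0 < z (m+2)
        linarith
      · show 10 * z (m+2) ≤ z (m+3)
        have hm : (0:ℝ) ≤ m := Nat.cast_nonneg m
        have q1 := cL_pos m hm
        have q2 := cA_ge m hm
        have q3 := cB_ge m hm
        have q4 := cC_nonneg m hm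
        have q5 := hrec m
        have q6 : 0 < z (m+2) := by linarith
        have q7 : 10 * cL m * z (m+2) ≤ cA m * z (m+2) := mul_le_mul_of_nonneg_right q2 q6.le
        have q8 : cC m * z m ≤ cB m * z (m+1) :=
          mul_le_mul q3 p2 p1 (q4.trans q3)
        refine le_of_mul_le_mul_left ?_ q1
        linarith
  have hpos : ∀ n, 1 ≤ n → 0 < z n := by
    intro n hn
    obtain ⟨k, rfl⟩ := Nat.exists_eq_add_of_le' hn
    exact (inv k).2.2.1
  refine log_div_of_ratio z l (by linarith) hpos ?_
  set ρ : ℕ → ℝ := fun n => z (n+2) / z (n+1) with hρ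
  have hA := lim_A
  have hB := lim_B
  have hC := lim_C
  -- recursion for the ratio
  have hρrec : ∀ n : ℕ, ρ (n+2) = cA ((n+1 : ℕ) : ℝ) / cL ((n+1 : ℕ) : ℝ)
      + (cB ((n+1 : ℕ) : ℝ) / cL ((n+1 : ℕ) : ℝ)) / ρ (n+1)
      - (cC ((n+1 : ℕ) : ℝ) / cL ((n+1 : ℕ) : ℝ)) / (ρ (n+1) * ρ n) := by
    intro n
    have q5 : cL ((n+1 : ℕ) : ℝ) * z (n+4) = cA ((n+1 : ℕ) : ℝ) * z (n+3)
      + cB ((n+1 : ℕ) : ℝ) * z (n+2) - cC ((n+1 : ℕ) : ℝ) * z (n+1) := hrec (n+1)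
    have q1 := cL_pos ((n+1 : ℕ) : ℝ) (Nat.cast_nonneg _)
    have w1 := hpos (n+1) (by omega)
    have w2 := hpos (n+2) (by omega)
    have w3 := hpos (n+3) (by omega)
    show z (n+4) / z (n+3) = cA ((n+1 : ℕ) : ℝ) / cL ((n+1 : ℕ) : ℝ)
      + (cB ((n+1 : ℕ) : ℝ) / cL ((n+1 : ℕ) : ℝ)) / (z (n+3) / z (n+2))
      - (cC ((n+1 : ℕ) : ℝ) / cL ((n+1 : ℕ) : ℝ)) / ((z (n+3) / z (n+2)) * (z (n+2) / z (n+1)))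
    generalize cL ((n+1 : ℕ) : ℝ) = L at *
    generalize cA ((n+1 : ℕ) : ℝ) = A at *
    generalize cB ((n+1 : ℕ) : ℝ) = B at *
    generalize cC ((n+1 : ℕ) : ℝ) = C at *
    field_simp
    linarith
  have hge : ∀ᶠ n in atTop, 100 ≤ ρ (n+1) := by
    filter_upwards [hA.eventually_const_le (show (100:ℝ) < 188 by norm_num)] with n hn
    show 100 ≤ z (n+3) / z (n+2)
    obtain ⟨p1, p2, p3, p4⟩ := inv n
    have q1 := cL_pos n (Nat.cast_nonneg _)
    have q3 := cB_ge n (Nat.cast_nonneg _)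
    have q4 := cC_nonneg n (Nat.cast_nonneg _)
    have q5 := hrec n
    have q6 : 0 < z (n+2) := by linarith
    rw [le_div_iff₀ q1] at hn
    rw [le_div_iff₀ q6]
    have q7 : 100 * cL n * z (n+2) ≤ cA n * z (n+2) := mul_le_mul_of_nonneg_right hn q6.le
    have q8 : cC n * z n ≤ cB n * z (n+1) := mul_le_mul q3 p2 p1 (q4.trans q3)
    refine le_of_mul_le_mul_left ?_ q1
    linarith
  set e : ℕ → ℝ := fun n => |ρ n - l| with he
  set d : ℕ → ℝ := fun n => |cA ((n+1 : ℕ) : ℝ) / cL ((n+1 : ℕ) : ℝ) - 188|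
    + |cB ((n+1 : ℕ) : ℝ) / cL ((n+1 : ℕ) : ℝ) - 2368|
    + |cC ((n+1 : ℕ) : ℝ) / cL ((n+1 : ℕ) : ℝ) - 4| with hd
  have hd0 : Tendsto d atTop (nhds 0) := by
    have g1 : Tendsto (fun n : ℕ => |cA n / cL n - 188| + |cB n / cL n - 2368|
        + |cC n / cL n - 4|) atTop (nhds (|188 - 188| + |2368-2368| + |4-4|)) :=
      ((hA.sub_const 188).abs.add (hB.sub_const 2368).abs).add (hC.sub_const 4).abs
    have g2 := (tendsto_add_atTop_iff_nat 1).2 g1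
    simpa [hd] using g2
  have hstep : ∀ᶠ n in atTop, e (n+2) ≤ 1/4 * e (n+1) + 1/4 * e n + d n := by
    have hge1 : ∀ᶠ n in atTop, 100 ≤ ρ n := by
      obtain ⟨N, hN⟩ := eventually_atTop.1 hge
      refine eventually_atTop.2 ⟨N+1, fun n hn => ?_⟩
      have := hN (n-1) (by omega)
      rwa [Nat.sub_add_cancel (by omega)] at this
    filter_upwards [hge, hge1] with n hn1 hn2
    show |ρ (n+2) - l| ≤ _
    rw [hρrec n]
    exact step_bound _ _ _ _ _ l hl hl3 hn1 hn2
  have hf : Tendsto (fun n => e (n+1) + 1/2 * e n) atTop (nhds 0) := by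
    refine contr_lemma _ d (3/4) (by norm_num) (by norm_num) (fun n => ?_) ?_ hd0
    · have := abs_nonneg (ρ (n+1) - l)
      have := abs_nonneg (ρ n - l)
      simp only [he]
      linarith
    · filter_upwards [hstep] with n hn
      have p1 : 0 ≤ e n := abs_nonneg _
      have p2 : 0 ≤ e (n+1) := abs_nonneg _
      show e (n+2) + 1/2 * e (n+1) ≤ _
      linarith
  have he0 : Tendsto e atTop (nhds 0) := by
    rw [← tendsto_add_atTop_iff_nat 1]
    refine squeeze_zero (fun n => abs_nonneg _) (fun n => ?_) hf
    have p1 : 0 ≤ e n := abs_nonneg _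
    show e (n+1) ≤ e (n+1) + 1/2 * e n
    linarith
  rw [tendsto_iff_dist_tendsto_zero]
  simpa only [Real.dist_eq] using he0

lemma logfact_lower (m : ℕ) (hm : 1 ≤ m) :
    m * Real.log m - m + Real.log m / 2 ≤ Real.log (m.factorial : ℝ) := by
  have h := Stirling.le_log_factorial_stirling (n := m) (by omega)
  have h2 : 0 ≤ Real.log (2 * Real.pi) := Real.log_nonneg (by linarith [Real.pi_gt_three])
  linarith

lemma logfact_upper (m : ℕ) (hm : 1 ≤ m) :
    Real.log (m.factorial : ℝ) ≤ m * Real.log m - m + Real.log m / 2 + 1 := by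
  obtain ⟨k, rfl⟩ := Nat.exists_eq_add_of_le' hm
  have h := Stirling.log_stirlingSeq'_antitone (Nat.zero_le k)
  simp only [Function.comp, Nat.succ_eq_add_one] at h
  rw [Stirling.log_stirlingSeq_formula, Stirling.log_stirlingSeq_formula] at h
  have hk : ((k+1 : ℕ) : ℝ) ≠ 0 := by positivity
  rw [Real.log_mul (by norm_num) hk, Real.log_div hk (Real.exp_ne_zero _)] at h
  simp only [Real.log_exp] at h
  norm_num at h
  push_cast at h ⊢
  linarith

/-- The summand of the series. -/
def tm (n k : ℕ) : ℝ := (((k : ℝ) + 1) + (n : ℝ)/2)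
    * (∏ j ∈ Finset.Icc 1 n, (((k : ℝ) + 1) - (j : ℝ)))
    * (∏ j ∈ Finset.Icc 1 n, (((k : ℝ) + 1) + (n : ℝ) + (j : ℝ)))
    / (∏ j ∈ Finset.range (n+1), (((k : ℝ) + 1) + (j : ℝ))^6)

lemma rr_eq (n : ℕ) : rr n = (Nat.factorial n : ℝ)^4 * ∑' k : ℕ, tm n k := rfl

lemma tm_zero (n k : ℕ) (h : k < n) : tm n k = 0 := by
  have : ∏ j ∈ Finset.Icc 1 n, (((k : ℝ) + 1) - (j : ℝ)) = 0 := by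
    refine Finset.prod_eq_zero (i := k+1) (by simp; omega) ?_
    push_cast; ring
  simp [tm, this]

lemma prod1 (n m : ℕ) : (∏ j ∈ Finset.Icc 1 n, ((((n+m : ℕ) : ℝ) + 1) - (j : ℝ)))
    * (m.factorial : ℝ) = ((n+m).factorial : ℝ) := by
  induction n generalizing m with
  | zero => simp
  | succ n ih =>
    rw [Finset.prod_Icc_succ_top (by omega)]
    have h := ih (m+1)
    have e : n + 1 + m = n + (m + 1) := by ring
    rw [e, ← h, Nat.factorial_succ]
    push_cast
    ring

lemma prod2 (n a : ℕ) : (∏ j ∈ Finset.Icc 1 n, ((a : ℝ) + (j : ℝ)))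
    * (a.factorial : ℝ) = ((a+n).factorial : ℝ) := by
  induction n with
  | zero => simp
  | succ n ih =>
    rw [Finset.prod_Icc_succ_top (by omega), ← add_assoc, Nat.factorial_succ]
    push_cast
    rw [← ih]
    ring

lemma prod3 (n a : ℕ) : (∏ j ∈ Finset.range (n+1), (((a : ℝ) + 1) + (j : ℝ)))
    * (a.factorial : ℝ) = ((a+1+n).factorial : ℝ) := by
  induction n with
  | zero => simp [Nat.factorial_succ]
  | succ n ih =>
    rw [Finset.prod_range_succ, ← add_assoc, Nat.factorial_succ]
    push_cast
    rw [← ih]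
    ring

lemma tm_eq (n m : ℕ) : tm n (n+m) = (((n+m+1 : ℕ) : ℝ) + (n:ℝ)/2)
    * (((n+m).factorial : ℝ) / (m.factorial : ℝ))
    * (((n+m+1+n+n).factorial : ℝ) / ((n+m+1+n).factorial : ℝ))
    / (((n+m+1+n).factorial : ℝ) / ((n+m).factorial : ℝ))^6 := by
  have f : ∀ a : ℕ, (a.factorial : ℝ) ≠ 0 := fun a => by exact_mod_cast a.factorial_ne_zero
  have h1 := prod1 n m
  have h2 := prod2 n (n+m+1+n)
  have h3 := prod3 n (n+m)
  rw [← eq_div_iff (f _)] at h1 h2 h3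
  unfold tm
  rw [Finset.prod_pow, h1, h3, ← h2]
  push_cast
  ring

lemma tm_pos (n m : ℕ) : 0 < tm n (n+m) := by
  rw [tm_eq]
  have f : ∀ a : ℕ, (0:ℝ) < (a.factorial : ℝ) := fun a => by exact_mod_cast a.factorial_pos
  have := f (n+m)
  have := f m
  have := f (n+m+1+n+n)
  have := f (n+m+1+n)
  positivity

lemma tm_nonneg (n k : ℕ) : 0 ≤ tm n k := by
  by_cases h : k < n
  · rw [tm_zero n k h]
  · obtain ⟨m, rfl⟩ := Nat.exists_eq_add_of_le (not_lt.1 h)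
    exact (tm_pos n m).le

lemma log_tm (n m : ℕ) : Real.log ((n.factorial : ℝ)^4 * tm n (n+m)) =
    Real.log (((n+m+1 : ℕ) : ℝ) + (n:ℝ)/2) + Real.log ((m+1 : ℕ) : ℝ)
     - 7 * Real.log ((n+m+1 : ℕ) : ℝ) + 4 * Real.log (n.factorial : ℝ)
     + 7 * Real.log ((n+m+1).factorial : ℝ) + Real.log ((n+m+1+n+n).factorial : ℝ)
     - Real.log ((m+1).factorial : ℝ) - 7 * Real.log ((n+m+1+n).factorial : ℝ) := by
  have f : ∀ a : ℕ, (0:ℝ) < (a.factorial : ℝ) := fun a => by exact_mod_cast a.factorial_pos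
  have f0 := f n
  have f1 := f (n+m)
  have f2 := f m
  have f3 := f (n+m+1+n+n)
  have f4 := f (n+m+1+n)
  have e1 : Real.log ((n+m+1).factorial : ℝ) = Real.log ((n+m+1 : ℕ) : ℝ)
      + Real.log ((n+m).factorial : ℝ) := by
    rw [Nat.factorial_succ, Nat.cast_mul, Real.log_mul (by positivity) f1.ne']
  have e2 : Real.log ((m+1).factorial : ℝ) = Real.log ((m+1 : ℕ) : ℝ)
      + Real.log (m.factorial : ℝ) := by
    rw [Nat.factorial_succ, Nat.cast_mul, Real.log_mul (by positivity) f2.ne']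
  rw [Real.log_mul (by positivity) (tm_pos n m).ne', tm_eq, e1, e2,
    Real.log_div (by positivity) (by positivity), Real.log_mul (by positivity) (by positivity),
    Real.log_mul (by positivity) (by positivity), Real.log_pow, Real.log_pow,
    Real.log_div f1.ne' f2.ne', Real.log_div f3.ne' f4.ne', Real.log_div f4.ne' f1.ne']
  push_cast
  ring

/-- The rate function. -/
def gg (t : ℝ) : ℝ := 7 * (t * Real.log t) + (t+2) * Real.log (t+2) - (t-1) * Real.log (t-1)
  - 7 * ((t+1) * Real.log (t+1))

lemma gg_scale (n p : ℝ) (hn : 0 < n) (hp : 0 < p) :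
    n * gg ((n+p)/n) = 4 * (n * Real.log n) + 7 * ((n+p) * Real.log (n+p))
      + (n+p+n+n) * Real.log (n+p+n+n) - p * Real.log p - 7 * ((n+p+n) * Real.log (n+p+n)) := by
  have e1 : (n+p)/n + 2 = (n+p+n+n)/n := by field_simp; ring
  have e2 : (n+p)/n - 1 = p/n := by field_simp; ring
  have e3 : (n+p)/n + 1 = (n+p+n)/n := by field_simp
  unfold gg
  rw [e1, e2, e3, Real.log_div (by positivity) hn.ne', Real.log_div (by positivity) hn.ne',
    Real.log_div (by positivity) hn.ne', Real.log_div (by positivity) hn.ne']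
  field_simp
  ring

lemma log_two_le_one : Real.log 2 ≤ 1 := by
  have := Real.log_two_lt_d9
  linarith

lemma log_three_le_two : Real.log 3 ≤ 2 := by
  have := Real.log_le_sub_one_of_pos (show (0:ℝ) < 3 by norm_num)
  linarith

lemma log_tm_bounds (n m : ℕ) (hn : 1 ≤ n) :
    Real.log ((n.factorial : ℝ)^4 * tm n (n+m)) ≤ n * gg (((n+m+1 : ℕ) : ℝ)/n)
      + 14 + 2 * Real.log n - 2 * Real.log ((n+m+1 : ℕ) : ℝ) ∧
    n * gg (((n+m+1 : ℕ) : ℝ)/n) - 12 - 6 * Real.log ((n+m+1 : ℕ) : ℝ) ≤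
      Real.log ((n.factorial : ℝ)^4 * tm n (n+m)) := by
  rw [log_tm]
  have hn' : (1:ℝ) ≤ n := by exact_mod_cast hn
  have hm' : (0:ℝ) ≤ m := Nat.cast_nonneg m
  have u0 := logfact_upper n hn
  have u1 := logfact_upper (n+m+1) (by omega)
  have u2 := logfact_upper (n+m+1+n+n) (by omega)
  have u3 := logfact_upper (m+1) (by omega)
  have u4 := logfact_upper (n+m+1+n) (by omega)
  have l0 := logfact_lower n hn
  have l1 := logfact_lower (n+m+1) (by omega)
  have l2 := logfact_lower (n+m+1+n+n) (by omega)
  have l3 := logfact_lower (m+1) (by omega)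
  have l4 := logfact_lower (n+m+1+n) (by omega)
  have sc := gg_scale n (m+1) (by linarith) (by linarith)
  have a1 : Real.log (((n+m+1 : ℕ) : ℝ) + (n:ℝ)/2) ≤ Real.log 2 + Real.log ((n+m+1 : ℕ) : ℝ) := by
    rw [← Real.log_mul (by norm_num) (by positivity)]
    refine Real.log_le_log (by positivity) ?_
    push_cast; linarith
  have a2 : Real.log ((n+m+1 : ℕ) : ℝ) ≤ Real.log (((n+m+1 : ℕ) : ℝ) + (n:ℝ)/2) := by
    refine Real.log_le_log (by positivity) ?_
    linarith
  have a3 : Real.log ((m+1 : ℕ) : ℝ) ≤ Real.log ((n+m+1 : ℕ) : ℝ) := by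
    refine Real.log_le_log (by positivity) ?_
    push_cast; linarith
  have a4 : 0 ≤ Real.log ((m+1 : ℕ) : ℝ) := Real.log_natCast_nonneg _
  have a5 : 0 ≤ Real.log (n : ℝ) := Real.log_natCast_nonneg _
  have a6 : Real.log ((n+m+1 : ℕ) : ℝ) ≤ Real.log ((n+m+1+n : ℕ) : ℝ) := by
    refine Real.log_le_log (by positivity) ?_
    push_cast; linarith
  have a7 : Real.log ((n+m+1+n : ℕ) : ℝ) ≤ Real.log 2 + Real.log ((n+m+1 : ℕ) : ℝ) := by
    rw [← Real.log_mul (by norm_num) (by positivity)]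
    refine Real.log_le_log (by positivity) ?_
    push_cast; linarith
  have a8 : Real.log ((n+m+1+n+n : ℕ) : ℝ) ≤ Real.log 3 + Real.log ((n+m+1 : ℕ) : ℝ) := by
    rw [← Real.log_mul (by norm_num) (by positivity)]
    refine Real.log_le_log (by positivity) ?_
    push_cast; linarith
  have a9 : Real.log ((m+1 : ℕ) : ℝ) ≤ Real.log ((n+m+1+n+n : ℕ) : ℝ) := by
    refine Real.log_le_log (by positivity) ?_
    push_cast; linarith
  have c2 := log_two_le_one
  have c3 := log_three_le_two
  push_cast at *
  have e : (n:ℝ) + (m + 1) = n + m + 1 := by ring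
  rw [e] at sc
  rw [sc]
  constructor <;> linarith

/-- Derivative of the rate function. -/
lemma gg_deriv (t : ℝ) (ht : 1 < t) : HasDerivAt gg
    (7 * Real.log t + Real.log (t+2) - Real.log (t-1) - 7 * Real.log (t+1)) t := by
  have h1 : HasDerivAt (fun t : ℝ => t * Real.log t) (Real.log t + 1) t :=
    Real.hasDerivAt_mul_log (by linarith)
  have h2 : HasDerivAt (fun t : ℝ => (t+2) * Real.log (t+2)) (Real.log (t+2) + 1) t :=
    (Real.hasDerivAt_mul_log (x := t+2) (by linarith)).comp_add_const t 2
  have h3 : HasDerivAt (fun t : ℝ => (t-1) * Real.log (t-1)) (Real.log (t-1) + 1) t :=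
    (Real.hasDerivAt_mul_log (x := t-1) (by linarith)).comp_sub_const t 1
  have h4 : HasDerivAt (fun t : ℝ => (t+1) * Real.log (t+1)) (Real.log (t+1) + 1) t :=
    (Real.hasDerivAt_mul_log (x := t+1) (by linarith)).comp_add_const t 1
  have h := (((h1.const_mul 7).add h2).sub h3).sub (h4.const_mul 7)
  exact h.congr_deriv (by ring)

def qq (t : ℝ) : ℝ := 2*t^6 + 6*t^5 + 4*t^4 - 2*t^3 - 6*t^2 - 4*t - 1

lemma qq_mono (s t : ℝ) (hs : 1 ≤ s) (h : s ≤ t) : qq s ≤ qq t := by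
  obtain ⟨x, rfl⟩ : ∃ x, s = 1 + x := ⟨s - 1, by ring⟩
  obtain ⟨y, rfl⟩ : ∃ y, t = 1 + x + y := ⟨t - (1+x), by ring⟩
  have hx : 0 ≤ x := by linarith
  have hy : 0 ≤ y := by linarith
  rw [← sub_nonneg]
  unfold qq
  ring_nf
  positivity

lemma gg_deriv_eq (t : ℝ) (ht : 1 < t) :
    7 * Real.log t + Real.log (t+2) - Real.log (t-1) - 7 * Real.log (t+1)
      = Real.log (t^7 * (t+2)) - Real.log ((t-1) * (t+1)^7) := by
  rw [Real.log_mul (by positivity) (by positivity),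
    Real.log_mul (by linarith) (by positivity), Real.log_pow, Real.log_pow]
  push_cast
  ring

lemma poly_eq (t : ℝ) : (t-1) * (t+1)^7 - t^7 * (t+2) = (2*t+1) * qq t := by
  unfold qq; ring

lemma gg_deriv_nonneg (t : ℝ) (ht : 1 < t) (h : qq t ≤ 0) :
    0 ≤ 7 * Real.log t + Real.log (t+2) - Real.log (t-1) - 7 * Real.log (t+1) := by
  rw [gg_deriv_eq t ht, sub_nonneg]
  have h0 : 0 < t - 1 := by linarith
  refine Real.log_le_log (by positivity) ?_
  have := poly_eq t
  have : (2*t+1) * qq t ≤ 0 := mul_nonpos_of_nonneg_of_nonpos (by linarith) h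
  linarith

lemma gg_deriv_nonpos (t : ℝ) (ht : 1 < t) (h : 0 ≤ qq t) :
    7 * Real.log t + Real.log (t+2) - Real.log (t-1) - 7 * Real.log (t+1) ≤ 0 := by
  rw [gg_deriv_eq t ht, sub_nonpos]
  have h0 : 0 < t - 1 := by linarith
  refine Real.log_le_log (by positivity) ?_
  have := poly_eq t
  have : 0 ≤ (2*t+1) * qq t := mul_nonneg (by linarith) h
  linarith

lemma gg_max (t0 : ℝ) (h1 : 1 < t0) (h0 : qq t0 = 0) (t : ℝ) (ht : 1 < t) : gg t ≤ gg t0 := by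
  rcases le_total t t0 with h | h
  · have hm : MonotoneOn gg (Set.Ioc 1 t0) := by
      refine monotoneOn_of_deriv_nonneg (convex_Ioc 1 t0) ?_ ?_ ?_
      · exact fun x hx => (gg_deriv x hx.1).continuousAt.continuousWithinAt
      · intro x hx
        rw [interior_Ioc] at hx
        exact (gg_deriv x hx.1).differentiableAt.differentiableWithinAt
      · intro x hx
        rw [interior_Ioc] at hx
        rw [(gg_deriv x hx.1).deriv]
        exact gg_deriv_nonneg x hx.1 (h0 ▸ qq_mono x t0 hx.1.le hx.2.le)
    exact hm ⟨ht, h⟩ ⟨h1, le_rfl⟩ h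
  · have hm : AntitoneOn gg (Set.Ici t0) := by
      refine antitoneOn_of_deriv_nonpos (convex_Ici t0) ?_ ?_ ?_
      · exact fun x hx => (gg_deriv x (h1.trans_le hx)).continuousAt.continuousWithinAt
      · intro x hx
        rw [interior_Ici] at hx
        exact (gg_deriv x (h1.trans hx)).differentiableAt.differentiableWithinAt
      · intro x hx
        rw [interior_Ici] at hx
        rw [(gg_deriv x (h1.trans hx)).deriv]
        exact gg_deriv_nonpos x (h1.trans hx) (h0 ▸ qq_mono t0 x h1.le (le_of_lt hx))
    exact hm (Set.mem_Ici.2 le_rfl) h h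

lemma exists_t0 : ∃ t0 : ℝ, 1 < t0 ∧ t0 < 2 ∧ qq t0 = 0 := by
  have hc : ContinuousOn qq (Set.Icc 1 2) := by unfold qq; fun_prop
  have := intermediate_value_Ioo (by norm_num : (1:ℝ) ≤ 2) hc
  obtain ⟨t, ht, h⟩ := this (show (0:ℝ) ∈ Set.Ioo (qq 1) (qq 2) by unfold qq; norm_num)
  exact ⟨t, ht.1, ht.2, h⟩

lemma gg_t0 (t : ℝ) (h1 : 1 < t) (h0 : qq t = 0) (l : ℝ)
    (hl : l^3 - 188*l^2 - 2368*l + 4 = 0) (hl0 : 0 < l) (hl1 : l < 1) : gg t = Real.log l := by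
  have ht1 : 0 < t - 1 := by linarith
  have hd : 7 * Real.log t + Real.log (t+2) - Real.log (t-1) - 7 * Real.log (t+1) = 0 :=
    le_antisymm (gg_deriv_nonpos t h1 h0.ge) (gg_deriv_nonneg t h1 h0.le)
  set x : ℝ := (t+2)^2 * (t-1) / (t+1)^7 with hx
  have e : gg t = Real.log x := by
    rw [hx, Real.log_div (by positivity) (by positivity), Real.log_mul (by positivity) ht1.ne',
      Real.log_pow, Real.log_pow]
    unfold gg
    push_cast
    linear_combination t * hd
  have hx0 : 0 < x := by positivity
  have hx1 : x < 1 := by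
    rw [hx, div_lt_one (by positivity), ← sub_pos]
    obtain ⟨y, rfl⟩ : ∃ y, t = 1 + y := ⟨t - 1, by ring⟩
    have hy : 0 < y := by linarith
    ring_nf
    positivity
  have hxr : x^3 - 188*x^2 - 2368*x + 4 = 0 := by
    rw [hx]
    field_simp
    unfold qq at h0
    linear_combination (-6404 - 86020*t - 414672*t^2 - 1091544*t^3 - 1823364*t^4 - 2066728*t^5
      - 1631751*t^6 - 892783*t^7 - 321827*t^8 - 62757*t^9 + 2016*t^10 + 5214*t^11 + 1666*t^12
      + 308*t^13 + 36*t^14 + 2*t^15) * h0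
  have : x = l := by
    have h2 : (x - l) * (x^2 + x*l + l^2 - 188*(x+l) - 2368) = 0 := by
      linear_combination hxr - hl
    rcases mul_eq_zero.1 h2 with h3 | h3
    · linarith
    · nlinarith
  rw [e, this]

lemma tm_bound (l : ℝ) (hl : l^3 - 188*l^2 - 2368*l + 4 = 0) (hl0 : 0 < l) (hl1 : l < 1)
    (n : ℕ) (hn : 1 ≤ n) (k : ℕ) :
    (n.factorial : ℝ)^4 * tm n k ≤
      (Real.exp (n * Real.log l + 14 + 2 * Real.log n)) * (1 / ((k:ℝ)+1)^2) := by
  by_cases h : k < n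
  · rw [tm_zero n k h, mul_zero]; positivity
  · obtain ⟨m, rfl⟩ := Nat.exists_eq_add_of_le (not_lt.1 h)
    obtain ⟨t0, ht1, -, ht0⟩ := exists_t0
    have hn' : (0:ℝ) < n := by exact_mod_cast hn
    have hp : 0 < (n.factorial : ℝ)^4 * tm n (n+m) := by
      have := tm_pos n m
      have : (0:ℝ) < (n.factorial : ℝ) := by exact_mod_cast n.factorial_pos
      positivity
    have h1 := (log_tm_bounds n m hn).1
    have h2 : gg (((n+m+1 : ℕ) : ℝ)/n) ≤ Real.log l := by
      rw [← gg_t0 t0 ht1 ht0 l hl hl0 hl1]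
      refine gg_max t0 ht1 ht0 _ ?_
      rw [lt_div_iff₀ hn']
      push_cast
      linarith [Nat.cast_nonneg (α := ℝ) m]
    have h3 : (n:ℝ) * gg (((n+m+1 : ℕ) : ℝ)/n) ≤ n * Real.log l :=
      mul_le_mul_of_nonneg_left h2 hn'.le
    have h4 : Real.exp (-(2 * Real.log ((n+m+1 : ℕ) : ℝ))) = 1 / (((n+m : ℕ):ℝ)+1)^2 := by
      rw [Real.exp_neg, one_div]
      congr 1
      have : 2 * Real.log ((n+m+1 : ℕ) : ℝ) = Real.log ((((n+m : ℕ):ℝ)+1)^2) := by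
        rw [Real.log_pow]; push_cast; ring
      rw [this, Real.exp_log (by positivity)]
    rw [← h4, ← Real.exp_add, ← Real.log_le_iff_le_exp hp]
    linarith

lemma summable_sq : Summable (fun k : ℕ => 1 / ((k:ℝ)+1)^2) := by
  have := (summable_nat_add_iff 1).2 (Real.summable_one_div_nat_pow.2 (by norm_num : 1 < 2))
  simpa using this

lemma log_div_self : Tendsto (fun n : ℕ => Real.log (n:ℝ) / (n:ℝ)) atTop (nhds 0) :=
  (Real.isLittleO_log_id_atTop.tendsto_div_nhds_zero).comp tendsto_natCast_atTop_atTop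

lemma rr_lim (l : ℝ) (hl : l^3 - 188*l^2 - 2368*l + 4 = 0) (hl0 : 0 < l) (hl1 : l < 1) :
    Tendsto (fun n : ℕ => Real.log |rr n| / (n : ℝ)) atTop (nhds (Real.log l)) := by
  obtain ⟨t0, ht1, ht2, ht0⟩ := exists_t0
  have hg := gg_t0 t0 ht1 ht0 l hl hl0 hl1
  set S : ℝ := ∑' k : ℕ, 1 / ((k:ℝ)+1)^2 with hS
  have hS0 : 0 < S := summable_sq.tsum_pos (fun k => by positivity) 0 (by norm_num)
  have hsum : ∀ n : ℕ, 1 ≤ n → Summable (fun k => (n.factorial : ℝ)^4 * tm n k) := by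
    intro n hn
    refine Summable.of_nonneg_of_le (fun k => ?_) (fun k => tm_bound l hl hl0 hl1 n hn k)
      (summable_sq.mul_left _)
    have := tm_nonneg n k
    positivity
  have hrr : ∀ n, rr n = ∑' k, (n.factorial : ℝ)^4 * tm n k := by
    intro n
    rw [rr_eq, tsum_mul_left]
  have hup : ∀ n : ℕ, 1 ≤ n →
      rr n ≤ Real.exp (n * Real.log l + 14 + 2 * Real.log n) * S := by
    intro n hn
    rw [hrr, hS, ← tsum_mul_left]
    exact (hsum n hn).tsum_le_tsum (fun k => tm_bound l hl hl0 hl1 n hn k)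
      (summable_sq.mul_left _)
  have hlow : ∀ n : ℕ, 1 ≤ n → ∀ m : ℕ, (n.factorial : ℝ)^4 * tm n (n+m) ≤ rr n := by
    intro n hn m
    rw [hrr]
    refine (hsum n hn).le_tsum (n+m) (fun k _ => ?_)
    have := tm_nonneg n k
    positivity
  have htp : ∀ n m : ℕ, 0 < (n.factorial : ℝ)^4 * tm n (n+m) := by
    intro n m
    have := tm_pos n m
    have : (0:ℝ) < (n.factorial : ℝ) := by exact_mod_cast n.factorial_pos
    positivity
  have hpos : ∀ n : ℕ, 1 ≤ n → 0 < rr n := fun n hn => (htp n 0).trans_le (hlow n hn 0)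
  have hinv : Tendsto (fun n : ℕ => ((n:ℝ))⁻¹) atTop (nhds 0) := tendsto_inv_atTop_nhds_zero_nat
  -- the index of the largest term
  set K : ℕ → ℕ := fun n => ⌊t0 * (n:ℝ)⌋₊ + 1 with hK
  have hKn : ∀ n, n + 1 ≤ K n := by
    intro n
    have : n ≤ ⌊t0 * (n:ℝ)⌋₊ := by
      refine Nat.le_floor ?_
      nlinarith [Nat.cast_nonneg (α := ℝ) n]
    show n + 1 ≤ ⌊t0 * (n:ℝ)⌋₊ + 1
    omega
  have hKlim : Tendsto (fun n : ℕ => (K n : ℝ) / n) atTop (nhds t0) := by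
    have h1 : Tendsto (fun n : ℕ => (⌊t0 * (n:ℝ)⌋₊ : ℝ) / (n:ℝ)) atTop (nhds t0) :=
      (tendsto_nat_floor_mul_div_atTop (by linarith : 0 ≤ t0)).comp tendsto_natCast_atTop_atTop
    have h2 := h1.add hinv
    rw [add_zero] at h2
    refine h2.congr (fun n => ?_)
    simp only [hK]
    push_cast
    ring
  have hKlog : ∀ n : ℕ, 1 ≤ n → Real.log (K n) ≤ 2 + Real.log n := by
    intro n hn
    have hn' : (1:ℝ) ≤ n := by exact_mod_cast hn
    have h1 : (K n : ℝ) ≤ 3 * n := by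
      have : (⌊t0 * (n:ℝ)⌋₊ : ℝ) ≤ t0 * n := Nat.floor_le (by positivity)
      simp only [hK]
      push_cast
      nlinarith
    have h2 : (0:ℝ) < K n := by
      have := hKn n
      exact_mod_cast (by omega : 0 < K n)
    have h3 := Real.log_le_log h2 h1
    rw [Real.log_mul (by norm_num) (by positivity)] at h3
    linarith [log_three_le_two]
  have hgl : Tendsto (fun n : ℕ => gg ((K n : ℝ) / n)) atTop (nhds (Real.log l)) := by
    rw [← hg]
    exact (gg_deriv t0 ht1).continuousAt.tendsto.comp hKlim
  have hL : Tendsto (fun n : ℕ => gg ((K n : ℝ) / n) - 24 * (n:ℝ)⁻¹ - 6 * (Real.log n / n))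
      atTop (nhds (Real.log l)) := by
    have := (hgl.sub (hinv.const_mul 24)).sub (log_div_self.const_mul 6)
    simpa using this
  have hU : Tendsto (fun n : ℕ => Real.log l + (14 + Real.log S) * (n:ℝ)⁻¹
      + 2 * (Real.log n / n)) atTop (nhds (Real.log l)) := by
    have := ((hinv.const_mul (14 + Real.log S)).const_add (Real.log l)).add
      (log_div_self.const_mul 2)
    simpa using this
  refine tendsto_of_tendsto_of_tendsto_of_le_of_le' hL hU ?_ ?_
  · filter_upwards [eventually_ge_atTop 1] with n hn
    have hn' : (0:ℝ) < n := by exact_mod_cast hn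
    obtain ⟨m, hm⟩ := Nat.exists_eq_add_of_le (hKn n)
    have e : K n = n + m + 1 := by omega
    have h1 := (log_tm_bounds n m hn).2
    rw [← e] at h1
    have h2 := Real.log_le_log (htp n m) (hlow n hn m)
    have h3 := hKlog n hn
    rw [abs_of_pos (hpos n hn), le_div_iff₀ hn']
    have : (gg ((K n : ℝ) / n) - 24 * (n:ℝ)⁻¹ - 6 * (Real.log n / n)) * n
        = n * gg ((K n : ℝ) / n) - 24 - 6 * Real.log n := by
      field_simp
    rw [this]
    linarith
  · filter_upwards [eventually_ge_atTop 1] with n hn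
    have hn' : (0:ℝ) < n := by exact_mod_cast hn
    have h2 := Real.log_le_log (hpos n hn) (hup n hn)
    rw [Real.log_mul (Real.exp_ne_zero _) hS0.ne', Real.log_exp] at h2
    rw [abs_of_pos (hpos n hn), div_le_iff₀ hn']
    have : (Real.log l + (14 + Real.log S) * (n:ℝ)⁻¹ + 2 * (Real.log n / n)) * n
        = n * Real.log l + 14 + Real.log S + 2 * Real.log n := by
      field_simp
      ring
    rw [this]
    linarith

/-- `lim (log |r_n|)/n = log λ₁` and
`lim (log |u_n|)/n = lim (log |w_n|)/n = lim (log |v_n|)/n = log λ₃`, where `λ₁` is the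
unique root of `λ³ − 188λ² − 2368λ + 4` in `(0, 1)` and `λ₃` its unique root greater
than `1`. -/
theorem stmt13
    (u w v : ℕ → ℚ)
    (hu : Rec2 u) (hw : Rec2 w) (hv : Rec2 v)
    (hu0 : u 0 = 1) (hu1 : u 1 = 9) (hu2 : u 2 = 469)
    (hw0 : w 0 = 0) (hw1 : w 1 = 33) (hw2 : w 2 = 6125/4)
    (hv0 : v 0 = 0) (hv1 : v 1 = 49) (hv2 : v 2 = 74463/32)
    (lam1 : ℝ) (hlam1root : lam1^3 - 188*lam1^2 - 2368*lam1 + 4 = 0)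
    (hlam1mem : lam1 ∈ Set.Ioo (0 : ℝ) 1)
    (lam3 : ℝ) (hlam3root : lam3^3 - 188*lam3^2 - 2368*lam3 + 4 = 0)
    (hlam3mem : 1 < lam3) :
    Tendsto (fun n : ℕ => Real.log |rr n| / (n : ℝ)) atTop (nhds (Real.log lam1)) ∧
    Tendsto (fun n : ℕ => Real.log |(u n : ℝ)| / (n : ℝ)) atTop (nhds (Real.log lam3)) ∧
    Tendsto (fun n : ℕ => Real.log |(w n : ℝ)| / (n : ℝ)) atTop (nhds (Real.log lam3)) ∧
    Tendsto (fun n : ℕ => Real.log |(v n : ℝ)| / (n : ℝ)) atTop (nhds (Real.log lam3)) := by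
  refine ⟨rr_lim lam1 hlam1root hlam1mem.1 hlam1mem.2, ?_, ?_, ?_⟩
  · exact growth u hu (by rw [hu0]; norm_num) (by rw [hu0, hu1]; norm_num) (by rw [hu1]; norm_num)
      (by rw [hu1, hu2]; norm_num) lam3 hlam3root hlam3mem
  · exact growth w hw (by rw [hw0]) (by rw [hw0, hw1]; norm_num) (by rw [hw1]; norm_num)
      (by rw [hw1, hw2]; norm_num) lam3 hlam3root hlam3mem
  · exact growth v hv (by rw [hv0]) (by rw [hv0, hv1]; norm_num) (by rw [hv1]; norm_num)
      (by rw [hv1, hv2]; norm_num) lam3 hlam3root hlam3mem
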